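/- Let G be an abelian group, X a nonempty compact Hausdorff topological space, and θ = ({X_t}_{t∈G}, {h_t}_{t∈G}) a topological partial action of G on X such that each X_t is clopen. Let α be the induced partial action of G on C(X) and R = C(X) ⋆_α G. Then R is simple (its only two-sided ideals are {0} and R) if and only if θ is topologically free and minimal. -/

import Mathlib

/-- A partial action `θ = ({X_t}, {h_t})` of a group `G` on a set `X`: subsets
`Xt t ⊆ X` and bijections `h t : Xt t⁻¹ → Xt t` (encoded as globally defined maps
whose values only matter on `Xt t⁻¹`). -/
structure SetPartialAction (G : Type*) [Group G] (X : Type*) where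
  Xt : G → Set X
  h : G → X → X
  h_mem : ∀ t, ∀ x ∈ Xt t⁻¹, h t x ∈ Xt t
  Xt_one : Xt 1 = Set.univ
  h_one : ∀ x, h 1 x = x
  h_left_inv : ∀ t, ∀ x ∈ Xt t⁻¹, h t⁻¹ (h t x) = x
  h_image : ∀ t s, h t '' (Xt t⁻¹ ∩ Xt s) = Xt t ∩ Xt (t * s)
  h_comp : ∀ t s, ∀ x ∈ Xt s⁻¹, x ∈ Xt (s⁻¹ * t⁻¹) → h t (h s x) = h (t * s) x

/-- A topological partial action of `G` on a topological space `X` in which every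
`Xt t` is clopen: the maps `h t : Xt t⁻¹ → Xt t` are homeomorphisms, i.e.
continuous on their domains (continuity of the inverse `h t⁻¹` on `Xt t` is an
instance of the same field at `t⁻¹`). -/
structure TopPartialAction (G : Type*) [Group G] (X : Type*) [TopologicalSpace X]
    extends SetPartialAction G X where
  clopen : ∀ t, IsClopen (Xt t)
  h_cont : ∀ t, ContinuousOn (h t) (Xt t⁻¹)

namespace SetPartialAction

variable {G : Type*} [Group G] {X : Type*}

/-- A subset `V ⊆ X` is `G`-invariant if `h t (V ∩ Xt t⁻¹) ⊆ V` for all `t`. -/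
def Invariant (θ : SetPartialAction G X) (V : Set X) : Prop :=
  ∀ t : G, θ.h t '' (V ∩ θ.Xt t⁻¹) ⊆ V

end SetPartialAction

namespace TopPartialAction

variable {G : Type*} [Group G] {X : Type*} [TopologicalSpace X]

/-- `θ` is minimal if `∅` and `X` are the only open `G`-invariant subsets of `X`. -/
def Minimal (θ : TopPartialAction G X) : Prop :=
  ∀ V : Set X, IsOpen V → θ.toSetPartialAction.Invariant V → V = ∅ ∨ V = Set.univ

/-- `θ` is topologically free if for every `t ≠ 1` the set
`F_t = {x ∈ Xt t⁻¹ : h t x = x}` has empty interior. -/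
def TopologicallyFree (θ : TopPartialAction G X) : Prop :=
  ∀ t : G, t ≠ 1 → interior {x ∈ θ.Xt t⁻¹ | θ.h t x = x} = ∅

/-- The ideal `D t = C(X_t) = {f ∈ C(X) : f = 0 off X_t}` of `C(X) = C(X, ℂ)`,
as an additive subgroup. -/
noncomputable def DC (θ : TopPartialAction G X) (t : G) : AddSubgroup C(X, ℂ) where
  carrier := {f : C(X, ℂ) | ∀ x ∉ θ.Xt t, f x = 0}
  zero_mem' := by intro x _; simp
  add_mem' := by intro f g hf hg x hx; simp [hf x hx, hg x hx]
  neg_mem' := by intro f hf x hx; simp [hf x hx]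

open Classical in
/-- The induced map `α t : C(X) → C(X)`, `α t f = f ∘ h t⁻¹` on `Xt t`, extended by
zero off `Xt t` (continuous since `Xt t` is clopen). -/
noncomputable def amapC (θ : TopPartialAction G X) (t : G) (f : C(X, ℂ)) : C(X, ℂ) :=
  ⟨fun x => if x ∈ θ.Xt t then f (θ.h t⁻¹ x) else 0, by
    rw [continuous_iff_continuousAt]
    intro x
    by_cases hx : x ∈ θ.Xt t
    · have hopen : IsOpen (θ.Xt t) := (θ.clopen t).isOpen
      have hc : ContinuousOn (fun y => f (θ.h t⁻¹ y)) (θ.Xt t) := by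
        apply f.continuous.comp_continuousOn
        have h1 := θ.h_cont t⁻¹
        rwa [inv_inv] at h1
      have hca := hc.continuousAt (hopen.mem_nhds hx)
      apply hca.congr
      filter_upwards [hopen.mem_nhds hx] with y hy
      simp [hy]
    · have hopen : IsOpen (θ.Xt t)ᶜ := (θ.clopen t).compl.isOpen
      have hca : ContinuousAt (fun _ : X => (0 : ℂ)) x := continuousAt_const
      apply hca.congr
      filter_upwards [hopen.mem_nhds hx] with y hy
      simp only [Set.mem_compl_iff] at hy
      simp [hy]⟩

/-- An ideal `I ⊆ C(X)` is `G`-invariant: `α t (I ∩ D t⁻¹) ⊆ I ∩ D t`. -/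
def GInvariantC (θ : TopPartialAction G X) (I : Ideal C(X, ℂ)) : Prop :=
  ∀ t : G, ∀ f ∈ I, f ∈ θ.DC t⁻¹ → θ.amapC t f ∈ I ∧ θ.amapC t f ∈ θ.DC t

/-- The underlying additive group of the partial skew group ring `C(X) ⋆_α G`. -/
abbrev SkewC (θ : TopPartialAction G X) : Type _ := Π₀ t : G, ↥(θ.DC t)

/-- The element `f δ_t` for `f ∈ D t`. -/
noncomputable def deltaC [DecidableEq G] (θ : TopPartialAction G X) (t : G)
    (f : C(X, ℂ)) (hf : f ∈ θ.DC t) : θ.SkewC :=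
  DFinsupp.single t ⟨f, hf⟩

/-- The element `f δ_0` for arbitrary `f ∈ C(X) = D 1`. -/
noncomputable def deltaC0 [DecidableEq G] (θ : TopPartialAction G X) (f : C(X, ℂ)) :
    θ.SkewC :=
  θ.deltaC 1 f (by intro x hx; rw [θ.Xt_one] at hx; exact absurd (Set.mem_univ x) hx)

end TopPartialAction

/-- The multiplication of `C(X) ⋆_α G`, *assumed* to exist, to be biadditive,
associative and to satisfy `(f δ_t)(g δ_s) = α_t(α_{t⁻¹}(f) g) δ_{ts}`. -/
structure CSkewMul {G : Type*} [Group G] [DecidableEq G] {X : Type*}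
    [TopologicalSpace X] (θ : TopPartialAction G X) where
  mul : θ.SkewC → θ.SkewC → θ.SkewC
  left_distrib : ∀ x y z, mul x (y + z) = mul x y + mul x z
  right_distrib : ∀ x y z, mul (x + y) z = mul x z + mul y z
  mul_single : ∀ (t s : G) (a : C(X, ℂ)) (ha : a ∈ θ.DC t)
      (b : C(X, ℂ)) (hb : b ∈ θ.DC s) (g : G),
    ((mul (θ.deltaC t a ha) (θ.deltaC s b hb)) g : C(X, ℂ)) =
      if g = t * s then θ.amapC t (θ.amapC t⁻¹ a * b) else 0
  assoc : ∀ x y z, mul (mul x y) z = mul x (mul y z)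

variable {G : Type*} [Group G] [DecidableEq G] {X : Type*} [TopologicalSpace X]
  {θ : TopPartialAction G X}

/-- `J` is a two-sided ideal of the partial skew group ring `C(X) ⋆_α G`. -/
def IsSkewIdealC (S : CSkewMul θ) (J : Set θ.SkewC) : Prop :=
  (0 : θ.SkewC) ∈ J ∧ (∀ x ∈ J, ∀ y ∈ J, x + y ∈ J) ∧ (∀ x ∈ J, -x ∈ J) ∧
    (∀ x ∈ J, ∀ y : θ.SkewC, S.mul x y ∈ J ∧ S.mul y x ∈ J)

/-- The center of the partial skew group ring `C(X) ⋆_α G`. -/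
def centerC (S : CSkewMul θ) : Set θ.SkewC :=
  {r | ∀ s : θ.SkewC, S.mul r s = S.mul s r}

section Helpers

set_option linter.unusedSectionVars false

theorem mem_Xt_inv (θ : TopPartialAction G X) (t : G) {x : X} (hx : x ∈ θ.Xt t) :
    θ.h t⁻¹ x ∈ θ.Xt t⁻¹ := θ.h_mem t⁻¹ x (by rwa [inv_inv])

theorem h_h_inv (θ : TopPartialAction G X) (t : G) {x : X} (hx : x ∈ θ.Xt t) :
    θ.h t (θ.h t⁻¹ x) = x := by
  have := θ.h_left_inv t⁻¹ x (by rwa [inv_inv])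
  rwa [inv_inv] at this

theorem mem_Xt_mul (θ : TopPartialAction G X) (t s : G) {x : X} (hx : x ∈ θ.Xt t)
    (hs : θ.h t⁻¹ x ∈ θ.Xt s) : x ∈ θ.Xt (t * s) := by
  have : θ.h t (θ.h t⁻¹ x) ∈ θ.Xt t ∩ θ.Xt (t * s) := by
    rw [← θ.h_image t s]
    exact ⟨_, ⟨mem_Xt_inv θ t hx, hs⟩, rfl⟩
  rw [h_h_inv θ t hx] at this
  exact this.2

theorem h_comp_inv (θ : TopPartialAction G X) (t s : G) {x : X} (hx : x ∈ θ.Xt t)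
    (hs : θ.h t⁻¹ x ∈ θ.Xt s) : θ.h s⁻¹ (θ.h t⁻¹ x) = θ.h (t * s)⁻¹ x := by
  rw [mul_inv_rev]
  apply θ.h_comp
  · rwa [inv_inv]
  · rw [inv_inv, inv_inv]; exact mem_Xt_mul θ t s hx hs

theorem mul_delta_apply (S : CSkewMul θ) (t s : G) (a : C(X, ℂ)) (ha : a ∈ θ.DC t)
    (b : C(X, ℂ)) (hb : b ∈ θ.DC s) (g : G) (x : X) :
    ((S.mul (θ.deltaC t a ha) (θ.deltaC s b hb)) g : C(X, ℂ)) x =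
      if g = t * s then a x * b (θ.h t⁻¹ x) else 0 := by
  rw [S.mul_single]
  split_ifs with h
  · by_cases hx : x ∈ θ.Xt t
    · simp [TopPartialAction.amapC, hx, mem_Xt_inv θ t hx, h_h_inv θ t hx]
    · simp [TopPartialAction.amapC, hx, ha x hx]
  · rfl

/-- right multiplication as a hom -/
noncomputable def mulL (S : CSkewMul θ) (x : θ.SkewC) : θ.SkewC →+ θ.SkewC :=
  AddMonoidHom.mk' (S.mul x) (S.left_distrib x)

noncomputable def mulR (S : CSkewMul θ) (x : θ.SkewC) : θ.SkewC →+ θ.SkewC :=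
  AddMonoidHom.mk' (fun y => S.mul y x) (fun y z => S.right_distrib y z x)

theorem skew_mul_zero (S : CSkewMul θ) (x : θ.SkewC) : S.mul x 0 = 0 := (mulL S x).map_zero
theorem skew_zero_mul (S : CSkewMul θ) (x : θ.SkewC) : S.mul 0 x = 0 := (mulR S x).map_zero

theorem skew_induction {p : θ.SkewC → Prop} (r : θ.SkewC) (h0 : p 0)
    (hadd : ∀ x y, p x → p y → p (x + y))
    (hs : ∀ t a ha, p (θ.deltaC t a ha)) : p r := by
  induction r using DFinsupp.induction with
  | h0 => exact h0
  | ha i b f _ _ ih => exact hadd _ _ (hs i b.1 b.2) ih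

theorem delta_apply (t : G) (a : C(X, ℂ)) (ha : a ∈ θ.DC t) (g : G) :
    ((θ.deltaC t a ha) g : C(X, ℂ)) = if t = g then a else 0 := by
  unfold TopPartialAction.deltaC
  rw [DFinsupp.single_apply]
  split_ifs with h
  · subst h; rfl
  · rfl

theorem mul_right_apply (S : CSkewMul θ) (r : θ.SkewC) (s : G)
    (b : C(X, ℂ)) (hb : b ∈ θ.DC s) (g : G) (x : X) :
    ((S.mul r (θ.deltaC s b hb)) g : C(X, ℂ)) x =
      (r (g * s⁻¹) : C(X, ℂ)) x * b (θ.h (g * s⁻¹)⁻¹ x) := by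
  induction r using skew_induction with
  | h0 => rw [skew_zero_mul]; simp
  | hadd y z hy hz => rw [S.right_distrib]; simp [hy, hz, add_mul]
  | hs t a ha =>
    rw [mul_delta_apply, delta_apply]
    by_cases h : g = t * s
    · subst h; simp
    · rw [if_neg h, if_neg]
      · simp
      · rintro rfl; simp at h

theorem mul_left_apply (S : CSkewMul θ) (r : θ.SkewC) (t : G)
    (a : C(X, ℂ)) (ha : a ∈ θ.DC t) (g : G) (x : X) :
    ((S.mul (θ.deltaC t a ha) r) g : C(X, ℂ)) x =
      a x * (r (t⁻¹ * g) : C(X, ℂ)) (θ.h t⁻¹ x) := by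
  induction r using skew_induction with
  | h0 => rw [skew_mul_zero]; simp
  | hadd y z hy hz => rw [S.left_distrib]; simp [hy, hz, mul_add]
  | hs s b hb =>
    rw [mul_delta_apply, delta_apply]
    by_cases h : g = t * s
    · subst h; simp
    · rw [if_neg h, if_neg]
      · simp
      · rintro rfl; simp at h

theorem mem_DC_one (θ : TopPartialAction G X) (f : C(X, ℂ)) : f ∈ θ.DC 1 := by
  intro x hx; rw [θ.Xt_one] at hx; exact absurd (Set.mem_univ x) hx

theorem deltaC0_eq (θ : TopPartialAction G X) (f : C(X, ℂ)) :
    θ.deltaC0 f = θ.deltaC 1 f (mem_DC_one θ f) := rfl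

theorem skew_ext {r s : θ.SkewC} (h : ∀ g x, (r g : C(X, ℂ)) x = (s g : C(X, ℂ)) x) : r = s := by
  apply DFinsupp.ext
  intro g
  apply Subtype.ext
  ext x
  exact h g x

theorem one_skew_mul (S : CSkewMul θ) (r : θ.SkewC) : S.mul (θ.deltaC0 1) r = r := by
  apply skew_ext
  intro g x
  simp only [deltaC0_eq]
  rw [mul_left_apply, show (1 : G)⁻¹ * g = g by simp]
  simp [θ.h_one]

theorem exists_bump [CompactSpace X] [T2Space X] {U : Set X} (hU : IsOpen U) {x : X}
    (hx : x ∈ U) : ∃ f : C(X, ℂ), f x = 1 ∧ ∀ y ∉ U, f y = 0 := by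
  obtain ⟨g, h0, h1, -⟩ := exists_continuous_zero_one_of_isClosed hU.isClosed_compl
    (isClosed_singleton (x := x)) (by simpa using hx)
  refine ⟨⟨fun y => (g y : ℂ), by fun_prop⟩, ?_, ?_⟩
  · have := h1 (Set.mem_singleton x)
    simp [this]
  · intro y hy
    have := h0 hy
    simp [this]

open Classical in
/-- indicator of Xt -/
noncomputable def indC (θ : TopPartialAction G X) (t : G) : C(X, ℂ) :=
  θ.amapC t 1

theorem indC_mem (θ : TopPartialAction G X) (t : G) : indC θ t ∈ θ.DC t := by
  intro x hx; simp [indC, TopPartialAction.amapC, hx]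

theorem indC_apply (θ : TopPartialAction G X) (t : G) {x : X} (hx : x ∈ θ.Xt t) :
    indC θ t x = 1 := by
  simp [indC, TopPartialAction.amapC, hx]

/-- the representation on functions -/
noncomputable def rep (θ : TopPartialAction G X) : θ.SkewC →+ ((X → ℂ) → X → ℂ) :=
  DFinsupp.liftAddHom fun t => AddMonoidHom.mk'
    (fun (a : θ.DC t) (φ : X → ℂ) x => (a : C(X, ℂ)) x * φ (θ.h t⁻¹ x))
    (by intro a b; funext φ x; simp [add_mul])

theorem rep_delta (t : G) (a : C(X, ℂ)) (ha : a ∈ θ.DC t) (φ : X → ℂ) (x : X) :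
    rep θ (θ.deltaC t a ha) φ x = a x * φ (θ.h t⁻¹ x) := by
  unfold rep TopPartialAction.deltaC
  rw [DFinsupp.liftAddHom_apply_single]
  rfl

theorem mul_delta (S : CSkewMul θ) (t s : G) (a : C(X, ℂ)) (ha : a ∈ θ.DC t)
    (b : C(X, ℂ)) (hb : b ∈ θ.DC s) : ∃ (c : C(X, ℂ)) (hc : c ∈ θ.DC (t * s)),
    S.mul (θ.deltaC t a ha) (θ.deltaC s b hb) = θ.deltaC (t * s) c hc ∧
    ∀ x, c x = a x * b (θ.h t⁻¹ x) := by
  refine ⟨_, (S.mul (θ.deltaC t a ha) (θ.deltaC s b hb) (t * s)).2, ?_, ?_⟩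
  · apply skew_ext
    intro g x
    rw [delta_apply]
    by_cases h : t * s = g
    · subst h; simp
    · rw [if_neg h, mul_delta_apply, if_neg (Ne.symm h)]; rfl
  · intro x
    rw [mul_delta_apply, if_pos rfl]

theorem rep_add_arg (r : θ.SkewC) (φ ψ : X → ℂ) :
    rep θ r (φ + ψ) = rep θ r φ + rep θ r ψ := by
  induction r using skew_induction with
  | h0 => simp
  | hadd y z hy hz => 
    rw [map_add, Pi.add_apply, Pi.add_apply, Pi.add_apply, hy, hz]; abel
  | hs t a ha => funext x; simp [rep_delta, mul_add]

theorem rep_zero_arg (r : θ.SkewC) : rep θ r 0 = 0 := by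
  have := rep_add_arg r 0 0
  simpa using this

theorem rep_mul (S : CSkewMul θ) (r s : θ.SkewC) (φ : X → ℂ) :
    rep θ (S.mul r s) φ = rep θ r (rep θ s φ) := by
  induction r using skew_induction with
  | h0 => rw [skew_zero_mul]; simp
  | hadd y z hy hz => rw [S.right_distrib]; simp [hy, hz]
  | hs t a ha =>
    induction s using skew_induction with
    | h0 => rw [skew_mul_zero]; simp [rep_zero_arg]
    | hadd y z hy hz => rw [S.left_distrib]; simp [hy, hz, rep_add_arg]
    | hs s b hb =>
      obtain ⟨c, hc, h1, h2⟩ := mul_delta S t s a ha b hb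
      rw [h1]
      funext x
      rw [rep_delta, rep_delta, rep_delta, h2, mul_assoc]
      by_cases hx : x ∈ θ.Xt t
      · by_cases hs : θ.h t⁻¹ x ∈ θ.Xt s
        · rw [h_comp_inv θ t s hx hs]
        · simp [hb _ hs]
      · simp [ha _ hx]

theorem simple_topFree [CompactSpace X] [T2Space X] [Nonempty X] (S : CSkewMul θ)
    (H : ∀ J : Set θ.SkewC, IsSkewIdealC S J → J = {0} ∨ J = Set.univ) :
    θ.TopologicallyFree := by
  intro t ht
  by_contra hne
  obtain ⟨x0, hx0⟩ := Set.nonempty_iff_ne_empty.mpr hne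
  have key : ∀ r : θ.SkewC, rep θ r = 0 → r = 0 := by
    have hI : IsSkewIdealC S {r | rep θ r = 0} := by
      refine ⟨map_zero _, ?_, ?_, ?_⟩
      · intro x (hx : rep θ x = 0) y (hy : rep θ y = 0)
        show rep θ (x + y) = 0
        rw [map_add, hx, hy, add_zero]
      · intro x (hx : rep θ x = 0)
        show rep θ (-x) = 0
        rw [map_neg, hx, neg_zero]
      · intro x (hx : rep θ x = 0) y
        refine ⟨?_, ?_⟩
        · show rep θ _ = 0
          funext φ; rw [rep_mul, hx]; rfl
        · show rep θ _ = 0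
          funext φ; rw [rep_mul, hx]; exact rep_zero_arg y
    rcases H _ hI with h | h
    · intro r hr
      have : r ∈ {r | rep θ r = 0} := hr
      rw [h] at this
      exact this
    · exfalso
      have : θ.deltaC0 1 ∈ {r | rep θ r = 0} := by rw [h]; trivial
      have h2 := congrFun (congrFun (show rep θ _ = 0 from this) 1) x0
      simp only [deltaC0_eq] at h2
      rw [rep_delta] at h2
      simp at h2
  obtain ⟨f, hf1, hf0⟩ := exists_bump isOpen_interior hx0
  have hF : ∀ y ∈ interior {x ∈ θ.Xt t⁻¹ | θ.h t x = x}, y ∈ θ.Xt t ∧ θ.h t⁻¹ y = y := by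
    intro y hy
    obtain ⟨h1, h2⟩ := interior_subset hy
    refine ⟨?_, ?_⟩
    · rw [← h2]; exact θ.h_mem t y h1
    · conv_lhs => rw [← h2]
      exact θ.h_left_inv t y h1
  have hft : f ∈ θ.DC t := fun y hy => hf0 y (fun h => hy (hF y h).1)
  have := key (θ.deltaC 1 f (mem_DC_one θ f) - θ.deltaC t f hft) (by
    rw [map_sub, sub_eq_zero]
    funext φ y
    rw [rep_delta, rep_delta, inv_one, θ.h_one]
    by_cases hy : y ∈ interior {x ∈ θ.Xt t⁻¹ | θ.h t x = x}
    · rw [(hF y hy).2]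
    · simp [hf0 y hy])
  rw [sub_eq_zero] at this
  have h2 : ((θ.deltaC 1 f (mem_DC_one θ f)) 1 : C(X, ℂ)) x0 = ((θ.deltaC t f hft) 1 : C(X, ℂ)) x0 := by
    rw [this]
  rw [delta_apply, delta_apply, if_pos rfl, if_neg ht, hf1] at h2
  simp at h2

theorem simple_minimal [CompactSpace X] [T2Space X] [Nonempty X] (S : CSkewMul θ)
    (H : ∀ J : Set θ.SkewC, IsSkewIdealC S J → J = {0} ∨ J = Set.univ) :
    θ.Minimal := by
  intro V hV hinv
  have hI : IsSkewIdealC S {r | ∀ g, ∀ x ∉ V, (r g : C(X, ℂ)) x = 0} := by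
    refine ⟨?_, ?_, ?_, ?_⟩
    · intro g x _; simp
    · intro r hr s hs g x hx; simp [hr g x hx, hs g x hx]
    · intro r hr g x hx; simp [hr g x hx]
    · intro r hr y
      induction y using skew_induction with
      | h0 => rw [skew_mul_zero, skew_zero_mul]; simp
      | hadd y z hy hz =>
        rw [S.left_distrib, S.right_distrib]
        refine ⟨fun g x hx => ?_, fun g x hx => ?_⟩
        · simp [hy.1 g x hx, hz.1 g x hx]
        · simp [hy.2 g x hx, hz.2 g x hx]
      | hs t a ha =>
        refine ⟨fun g x hx => ?_, fun g x hx => ?_⟩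
        · rw [mul_right_apply, hr _ x hx, zero_mul]
        · rw [mul_left_apply]
          by_cases hxt : x ∈ θ.Xt t
          · rw [hr, mul_zero]
            intro hv
            apply hx
            have := hinv t ⟨_, ⟨hv, mem_Xt_inv θ t hxt⟩, rfl⟩
            rwa [h_h_inv θ t hxt] at this
          · rw [ha x hxt, zero_mul]
  rcases H _ hI with h | h
  · left
    by_contra hne
    obtain ⟨x0, hx0⟩ := Set.nonempty_iff_ne_empty.mpr hne
    obtain ⟨f, hf1, hf0⟩ := exists_bump hV hx0
    have : θ.deltaC 1 f (mem_DC_one θ f) ∈ {r : θ.SkewC | ∀ g, ∀ x ∉ V, (r g : C(X, ℂ)) x = 0} := by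
      intro g x hx
      rw [delta_apply]
      split_ifs
      · exact hf0 x hx
      · rfl
    rw [h] at this
    have h2 : ((θ.deltaC 1 f (mem_DC_one θ f)) 1 : C(X, ℂ)) x0 = 0 := by
      rw [Set.mem_singleton_iff.mp this]; rfl
    rw [delta_apply, if_pos rfl, hf1] at h2
    simp at h2
  · right
    apply Set.eq_univ_of_forall
    intro x
    by_contra hx
    have : θ.deltaC 1 1 (mem_DC_one θ 1) ∈ {r : θ.SkewC | ∀ g, ∀ x ∉ V, (r g : C(X, ℂ)) x = 0} := by
      rw [h]; trivial
    have h2 := this 1 x hx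
    rw [delta_apply, if_pos rfl] at h2
    simp at h2

theorem shrink [T2Space X] (hfree : θ.TopologicallyFree) (T : Finset G) (h1 : ∀ s ∈ T, s ≠ 1)
    {W : Set X} (hW : IsOpen W) (hne : W.Nonempty) :
    ∃ U ⊆ W, IsOpen U ∧ U.Nonempty ∧ ∀ s ∈ T, ∀ x ∈ U, x ∈ θ.Xt s → θ.h s⁻¹ x ∉ U := by
  induction T using Finset.induction_on with
  | empty => exact ⟨W, subset_rfl, hW, hne, by simp⟩
  | insert s T _ ih =>
    obtain ⟨U, hUW, hU, hUne, hUT⟩ := ih (fun s hs => h1 s (Finset.mem_insert_of_mem hs))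
    have hs : s⁻¹ ≠ 1 := by simpa using h1 s (Finset.mem_insert_self _ _)
    suffices ∃ U' ⊆ U, IsOpen U' ∧ U'.Nonempty ∧ ∀ x ∈ U', x ∈ θ.Xt s → θ.h s⁻¹ x ∉ U' by
      obtain ⟨U', h1, h2, h3, h4⟩ := this
      refine ⟨U', h1.trans hUW, h2, h3, ?_⟩
      intro s' hs' x hx hxs
      rcases Finset.mem_insert.mp hs' with rfl | hs'
      · exact h4 x hx hxs
      · exact fun h => hUT s' hs' x (h1 hx) hxs (h1 h)
    have hnot : ∃ x ∈ U, ¬ (x ∈ θ.Xt s ∧ θ.h s⁻¹ x = x) := by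
      by_contra hcon
      push Not at hcon
      have hsub : U ⊆ interior {x ∈ θ.Xt s⁻¹⁻¹ | θ.h s⁻¹ x = x} := by
        apply interior_maximal _ hU
        intro x hx
        rw [inv_inv]
        exact hcon x hx
      rw [hfree _ hs] at hsub
      obtain ⟨x, hx⟩ := hUne
      exact hsub hx
    obtain ⟨x, hxU, hx⟩ := hnot
    by_cases hxs : x ∈ θ.Xt s
    · have hne : x ≠ θ.h s⁻¹ x := fun h => hx ⟨hxs, h.symm⟩
      obtain ⟨A, B, hA, hB, hxA, hxB, hAB⟩ := t2_separation hne
      have hc : ContinuousOn (θ.h s⁻¹) (θ.Xt s) := by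
        have := θ.h_cont s⁻¹
        rwa [inv_inv] at this
      have hop : IsOpen (θ.Xt s ∩ θ.h s⁻¹ ⁻¹' B) :=
        hc.isOpen_inter_preimage (θ.clopen s).isOpen hB
      refine ⟨U ∩ A ∩ (θ.Xt s ∩ θ.h s⁻¹ ⁻¹' B), fun y hy => hy.1.1, (hU.inter hA).inter hop,
        ⟨x, ⟨hxU, hxA⟩, hxs, hxB⟩, ?_⟩
      intro y hy _ hy'
      exact Set.disjoint_left.mp hAB hy'.1.2 hy.2.2
    · refine ⟨U ∩ (θ.Xt s)ᶜ, Set.inter_subset_left, hU.inter (θ.clopen s).compl.isOpen,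
        ⟨x, hxU, hxs⟩, ?_⟩
      intro y hy hys
      exact absurd hys hy.2

theorem exists_coeff_one [CompactSpace X] [T2Space X] (S : CSkewMul θ)
    (hfree : θ.TopologicallyFree) {J : Set θ.SkewC} (hJ : IsSkewIdealC S J)
    {r : θ.SkewC} (hr : r ∈ J) (hr0 : r ≠ 0) :
    ∃ f : C(X, ℂ), f ≠ 0 ∧ θ.deltaC0 f ∈ J := by
  classical
  obtain ⟨q, hq, x0, hq0⟩ : ∃ q ∈ J, ∃ x0, (q 1 : C(X, ℂ)) x0 ≠ 0 := by
    have : ∃ t x, (r t : C(X, ℂ)) x ≠ 0 := by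
      by_contra hcon
      push Not at hcon
      exact hr0 (skew_ext (fun g x => by rw [hcon]; rfl))
    obtain ⟨t, x, hx⟩ := this
    refine ⟨S.mul r (θ.deltaC t⁻¹ (indC θ t⁻¹) (indC_mem θ t⁻¹)), (hJ.2.2.2 r hr _).1, x, ?_⟩
    have hxt : x ∈ θ.Xt t := by
      by_contra h
      exact hx ((r t).2 x h)
    rw [mul_right_apply, one_mul, inv_inv, indC_apply θ _ (mem_Xt_inv θ t hxt), mul_one]
    exact hx
  have hWo : IsOpen {x | (q 1 : C(X, ℂ)) x ≠ 0} :=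
    isOpen_ne_fun (q 1 : C(X, ℂ)).continuous continuous_const
  obtain ⟨U, hUW, hU, ⟨x, hx⟩, hUT⟩ := shrink hfree (q.support.erase 1)
    (fun s hs => (Finset.mem_erase.mp hs).1) hWo ⟨x0, hq0⟩
  obtain ⟨f, hf1, hf0⟩ := exists_bump hU hx
  have hmem := (hJ.2.2.2 _ (hJ.2.2.2 q hq (θ.deltaC 1 f (mem_DC_one θ f))).1
    (θ.deltaC 1 f (mem_DC_one θ f))).2
  have heq : S.mul (θ.deltaC 1 f (mem_DC_one θ f)) (S.mul q (θ.deltaC 1 f (mem_DC_one θ f))) =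
      θ.deltaC0 (f * ((q 1 : C(X, ℂ)) * f)) := by
    apply skew_ext
    intro g y
    simp only [deltaC0_eq]
    rw [mul_left_apply, mul_right_apply, delta_apply, show (1 : G)⁻¹ * g * 1⁻¹ = g by simp]
    simp only [inv_one, mul_one, one_mul, θ.h_one]
    by_cases hg : 1 = g
    · subst hg; simp [θ.h_one]
    · rw [if_neg hg]
      show _ = (0 : ℂ)
      by_cases hyU : y ∈ U
      · by_cases hgs : g ∈ q.support
        · by_cases hyg : y ∈ θ.Xt g
          · rw [hf0 _ (hUT g (Finset.mem_erase.mpr ⟨Ne.symm hg, hgs⟩) y hyU hyg)]; simp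
          · rw [(q g).2 y hyg]; simp
        · rw [DFinsupp.notMem_support_iff] at hgs
          rw [hgs]; simp
      · rw [hf0 y hyU]; simp
  rw [heq] at hmem
  refine ⟨_, ?_, hmem⟩
  intro h0
  have h2 := DFunLike.congr_fun h0 x
  simp only [ContinuousMap.mul_apply, hf1, one_mul, mul_one] at h2
  exact hUW hx h2

theorem deltaC0_add (f g : C(X, ℂ)) : θ.deltaC0 (f + g) = θ.deltaC0 f + θ.deltaC0 g := by
  apply skew_ext
  intro k x
  simp only [deltaC0_eq]
  rw [DFinsupp.add_apply, AddSubgroup.coe_add, delta_apply, delta_apply, delta_apply]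
  split_ifs <;> simp

theorem deltaC0_mul (S : CSkewMul θ) (f g : C(X, ℂ)) :
    θ.deltaC0 (f * g) = S.mul (θ.deltaC0 f) (θ.deltaC0 g) := by
  apply skew_ext
  intro k x
  simp only [deltaC0_eq]
  rw [mul_delta_apply, delta_apply, mul_one, inv_one, θ.h_one]
  by_cases h : k = 1
  · subst h; simp
  · rw [if_neg h, if_neg (Ne.symm h)]; rfl

theorem simple_of [CompactSpace X] [T2Space X] (S : CSkewMul θ)
    (hfree : θ.TopologicallyFree) (hmin : θ.Minimal) {J : Set θ.SkewC} (hJ : IsSkewIdealC S J) :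
    J = {0} ∨ J = Set.univ := by
  by_cases hJ0 : ∃ r ∈ J, r ≠ 0
  swap
  · left
    push Not at hJ0
    exact Set.Subset.antisymm hJ0 (by rintro _ rfl; exact hJ.1)
  right
  obtain ⟨r, hr, hr0⟩ := hJ0
  obtain ⟨f, hf, hfJ⟩ := exists_coeff_one S hfree hJ hr hr0
  let I : Ideal C(X, ℂ) :=
    { carrier := {g | θ.deltaC0 g ∈ J}
      add_mem' := by
        intro a b ha hb
        show θ.deltaC0 (a + b) ∈ J
        rw [deltaC0_add]; exact hJ.2.1 _ ha _ hb
      zero_mem' := by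
        show θ.deltaC0 0 ∈ J
        convert hJ.1
        exact DFinsupp.single_zero 1
      smul_mem' := by
        intro c a ha
        show θ.deltaC0 (c * a) ∈ J
        rw [deltaC0_mul S]; exact (hJ.2.2.2 _ ha _).2 }
  have hmemI : ∀ g, g ∈ I ↔ θ.deltaC0 g ∈ J := fun g => Iff.rfl
  have hinv : θ.toSetPartialAction.Invariant (ContinuousMap.setOfIdeal I) := by
    rintro t _ ⟨x, ⟨hx, hxt⟩, rfl⟩
    obtain ⟨g, hg, hgx⟩ := ContinuousMap.mem_setOfIdeal.mp hx
    rw [ContinuousMap.mem_setOfIdeal]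
    have hm := (hJ.2.2.2 _ ((hJ.2.2.2 _ hg (θ.deltaC t (indC θ t) (indC_mem θ t))).2)
      (θ.deltaC t⁻¹ (indC θ t⁻¹) (indC_mem θ t⁻¹))).1
    obtain ⟨c, hc, hc1, hc2⟩ := mul_delta S t 1 (indC θ t) (indC_mem θ t) g (mem_DC_one θ g)
    obtain ⟨d, hd, hd1, hd2⟩ := mul_delta S (t * 1) t⁻¹ c hc (indC θ t⁻¹) (indC_mem θ t⁻¹)
    have heq : S.mul (S.mul (θ.deltaC t (indC θ t) (indC_mem θ t)) (θ.deltaC0 g))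
        (θ.deltaC t⁻¹ (indC θ t⁻¹) (indC_mem θ t⁻¹)) = θ.deltaC0 d := by
      simp only [deltaC0_eq]
      rw [hc1, hd1]
      apply skew_ext
      intro k y
      rw [delta_apply, delta_apply, mul_one, mul_inv_cancel]
    rw [heq] at hm
    refine ⟨d, hm, ?_⟩
    have hy : θ.h t x ∈ θ.Xt t := θ.h_mem t x hxt
    rw [hd2, hc2, mul_one, θ.h_left_inv t x hxt, indC_apply θ t hy, indC_apply θ _ hxt]
    simpa using hgx
  have hV : ContinuousMap.setOfIdeal I = Set.univ := by
    rcases hmin _ (ContinuousMap.setOfIdeal_open I) hinv with h | h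
    · exfalso
      apply hf
      ext x
      have : x ∉ ContinuousMap.setOfIdeal I := by rw [h]; simp
      exact ContinuousMap.notMem_setOfIdeal.mp this hfJ
    · exact h
  have hI : I = ⊤ := by
    by_contra hne
    obtain ⟨M, hM, hIM⟩ := Ideal.exists_le_maximal I hne
    obtain ⟨x, hx⟩ := ContinuousMap.setOfIdeal_eq_compl_singleton M
    have h1 : x ∉ ContinuousMap.setOfIdeal M := by rw [hx]; simp
    have h2 : x ∈ ContinuousMap.setOfIdeal I := by rw [hV]; trivial
    obtain ⟨g, hg, hgx⟩ := ContinuousMap.mem_setOfIdeal.mp h2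
    exact hgx (ContinuousMap.notMem_setOfIdeal.mp h1 (hIM hg))
  have h1 : θ.deltaC0 1 ∈ J := (hmemI 1).mp (by rw [hI]; trivial)
  apply Set.eq_univ_of_forall
  intro y
  have := (hJ.2.2.2 _ h1 y).1
  rwa [one_skew_mul] at this

end Helpers

theorem simple_iff_topFree_and_minimal
    {G' : Type*} [CommGroup G'] [DecidableEq G'] {Y : Type*} [TopologicalSpace Y]
    [CompactSpace Y] [T2Space Y] [Nonempty Y]
    (θ' : TopPartialAction G' Y) (S : CSkewMul θ') :
    (∀ J : Set θ'.SkewC, IsSkewIdealC S J → J = {0} ∨ J = Set.univ) ↔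
      (θ'.TopologicallyFree ∧ θ'.Minimal) := by
  exact ⟨fun H => ⟨simple_topFree S H, simple_minimal S H⟩,
    fun h J hJ => simple_of S h.1 h.2 hJ⟩
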